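/- Let K be a field, S1 = K[x_1,…,x_n] and S2 = K[y_1,…,y_m] polynomial rings in disjoint sets of variables, and let I1 ⊆ S1 and I2 ⊆ S2 be squarefree monomial ideals. If both normalized depth functions g_{I1} and g_{I2} are non-increasing on their domains, then the normalized depth function g_{I1·I2} of the product ideal I1·I2 in S = K[x_1,…,x_n,y_1,…,y_m] is non-increasing on {1,…,ν(I1·I2)}. -/

import Mathlib

open MvPolynomial

/-- The squarefree monomial `∏ i ∈ F, xᵢ`. -/
noncomputable def sqMon (K : Type) [Field K] {σ : Type} (F : Finset σ) :
    MvPolynomial σ K := ∏ i ∈ F, X i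

/-- `I` is a squarefree monomial ideal if it is generated by squarefree monomials. -/
def IsSqfreeMonomialIdeal (K : Type) [Field K] {σ : Type}
    (I : Ideal (MvPolynomial σ K)) : Prop :=
  ∃ 𝒢 : Set (Finset σ), I = Ideal.span ((sqMon K) '' 𝒢)

/-- The `k`-th squarefree power `I^[k]`: the ideal generated by all squarefree
monomials belonging to `I^k`. -/
noncomputable def sqfreePower (K : Type) [Field K] {σ : Type}
    (I : Ideal (MvPolynomial σ K)) (k : ℕ) : Ideal (MvPolynomial σ K) :=
  Ideal.span {m | ∃ F : Finset σ, m = sqMon K F ∧ m ∈ I ^ k}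

/-- The monomial grade `ν(I)`: the largest `k` with `I^[k] ≠ (0)`. -/
noncomputable def monGrade (K : Type) [Field K] {σ : Type}
    (I : Ideal (MvPolynomial σ K)) : ℕ :=
  sSup {k | sqfreePower K I k ≠ ⊥}

/-- The initial degree of a squarefree monomial ideal: the least degree of a
(squarefree) monomial belonging to it. -/
noncomputable def indeg (K : Type) [Field K] {σ : Type}
    (I : Ideal (MvPolynomial σ K)) : ℕ :=
  sInf {d | ∃ F : Finset σ, F.card = d ∧ sqMon K F ∈ I}

/-- The depth of `S/I` over the polynomial ring `S`: the longest length of a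
regular sequence on `S/I` consisting of elements of the irrelevant maximal ideal. -/
noncomputable def polyDepth (K : Type) [Field K] {σ : Type}
    (I : Ideal (MvPolynomial σ K)) : ℕ :=
  sSup {k | ∃ rs : List (MvPolynomial σ K), rs.length = k ∧
    (∀ r ∈ rs, r ∈ Ideal.span (Set.range (X : σ → MvPolynomial σ K))) ∧
    RingTheory.Sequence.IsRegular (MvPolynomial σ K ⧸ I) rs}

/-- The normalized depth function `g_I(k) = depth(S/I^[k]) - (indeg(I^[k]) - 1)`. -/
noncomputable def nDepth (K : Type) [Field K] {σ : Type}
    (I : Ideal (MvPolynomial σ K)) (k : ℕ) : ℤ :=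
  (polyDepth K (sqfreePower K I k) : ℤ) - ((indeg K (sqfreePower K I k) : ℤ) - 1)

/-!
In disjoint sets of variables `(I * J)^[k] = I^[k] * J^[k]`, and over a field the product of two
ideals `A`, `B` in disjoint variables is their intersection. The depth of the latter is found from
the Mayer–Vietoris sequence `0 → S/(A ∩ B) → S/A × S/B → S/(A + B) → 0`. Since
`S/(A + B) = S₁/A ⊗ S₂/B`, depth is additive: `depth S/(A + B) = depth S₁/A + depth S₂/B`. For
`B ≠ 0` this is smaller than `depth S/A = depth S₁/A + dim S₂`, and symmetrically for `A ≠ 0`, so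
`depth S/(A ∩ B) = depth S₁/A + depth S₂/B + 1`. As initial degrees also add up, the normalized
depth functions satisfy `g_{IJ} = g_I + g_J` for proper `I` and `J`; if one of the ideals is the
unit ideal, then `g_{IJ}` is the normalized depth function of the other, shifted by the number of
added variables.
-/

section ExtDepth

open CategoryTheory Abelian

section LongExactSequence

universe w v u

variable {C : Type u} [Category.{v} C] [Abelian C] [HasExt.{w} C] (X : C) {S : ShortComplex C}
  {i : ℕ}

theorem eq_zero_of_comp_mk₀_f_eq_zero (hS : S.ShortExact)
    (h₃ : ∀ j, j + 1 = i → Subsingleton (Ext X S.X₃ j)) (e : Ext X S.X₁ i)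
    (he : e.comp (Ext.mk₀ S.f) (add_zero i) = 0) : e = 0 := by
  cases i with
  | zero =>
    have := hS.mono_f
    exact Ext.postcomp_mk₀_injective_of_mono X S.f (by simpa using he)
  | succ j =>
    obtain ⟨e₃, rfl⟩ := Ext.covariant_sequence_exact₁ X hS e he rfl
    rw [(h₃ j rfl).elim e₃ 0, Ext.zero_comp]

theorem subsingleton_ext_X₁ (hS : S.ShortExact) (h₂ : Subsingleton (Ext X S.X₂ i))
    (h₃ : ∀ j, j + 1 = i → Subsingleton (Ext X S.X₃ j)) : Subsingleton (Ext X S.X₁ i) :=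
  subsingleton_of_forall_eq 0 fun e =>
    eq_zero_of_comp_mk₀_f_eq_zero X hS h₃ e (h₂.elim _ _)

theorem subsingleton_ext_X₂ (hS : S.ShortExact) (h₁ : Subsingleton (Ext X S.X₁ i))
    (h₃ : Subsingleton (Ext X S.X₃ i)) : Subsingleton (Ext X S.X₂ i) := by
  refine subsingleton_of_forall_eq 0 fun e => ?_
  obtain ⟨e₁, rfl⟩ := Ext.covariant_sequence_exact₂ X hS e (h₃.elim _ _)
  rw [h₁.elim e₁ 0, Ext.zero_comp]

theorem subsingleton_ext_X₃ (hS : S.ShortExact) (h₂ : Subsingleton (Ext X S.X₂ i))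
    (h₁ : Subsingleton (Ext X S.X₁ (i + 1))) : Subsingleton (Ext X S.X₃ i) := by
  refine subsingleton_of_forall_eq 0 fun e => ?_
  obtain ⟨e₂, rfl⟩ := Ext.covariant_sequence_exact₃ X hS e rfl (h₁.elim _ _)
  rw [h₂.elim e₂ 0, Ext.zero_comp]

end LongExactSequence

universe u

variable {R : Type u} [CommRing R] (I : Ideal R) (M : Type u) [AddCommGroup M] [Module R M]

/-- The depth (or grade) of the module `M` with respect to the ideal `I`, in its homological form:
the least `i` with `Ext ^ i (R ⧸ I, M) ≠ 0`, which is `⊤` if there is no such `i`. -/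
noncomputable def extDepth : ℕ∞ :=
  ⨅ (i : ℕ) (_ : Nontrivial (Ext (ModuleCat.of R (R ⧸ I)) (ModuleCat.of R M) i)), (i : ℕ∞)

variable {I M}

theorem natCast_le_extDepth_iff {k : ℕ} : (k : ℕ∞) ≤ extDepth I M ↔
    ∀ i < k, Subsingleton (Ext (ModuleCat.of R (R ⧸ I)) (ModuleCat.of R M) i) := by
  simp only [extDepth, le_iInf_iff, Nat.cast_le]
  refine forall_congr' fun i => ?_
  rw [← not_imp_not, not_le, not_nontrivial_iff_subsingleton]

theorem extDepth_ne_zero_iff : extDepth I M ≠ 0 ↔ Subsingleton ((R ⧸ I) →ₗ[R] M) := by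
  rw [← Order.one_le_iff_ne_zero, ← Nat.cast_one, natCast_le_extDepth_iff]
  simp only [Nat.lt_one_iff, forall_eq]
  exact (Ext.addEquiv₀.toEquiv.trans ModuleCat.homAddEquiv.toEquiv).subsingleton_congr

theorem extDepth_ne_zero_iff_exists_isSMulRegular [IsNoetherianRing R] [Module.Finite R M] :
    extDepth I M ≠ 0 ↔ ∃ x ∈ I, IsSMulRegular M x := by
  rw [extDepth_ne_zero_iff, IsSMulRegular.subsingleton_linearMap_iff, Ideal.annihilator_quotient]

theorem extDepth_eq_zero_iff : extDepth I M = 0 ↔ ∃ m : M, m ≠ 0 ∧ ∀ z ∈ I, z • m = 0 := by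
  rw [← not_ne_iff, extDepth_ne_zero_iff, not_iff_comm]
  constructor
  · intro h
    refine subsingleton_of_forall_eq 0 fun f => Submodule.linearMap_qext I (LinearMap.ext_ring ?_)
    by_contra hf
    refine h ⟨f (Ideal.Quotient.mk I 1), hf, fun z hz => ?_⟩
    have hz0 : z • Ideal.Quotient.mk I 1 = 0 :=
      (Submodule.Quotient.mk_eq_zero I).2 (by simpa using hz)
    rw [← map_smul, hz0, map_zero]
  · rintro h ⟨m, hm, hI⟩
    have hle : I ≤ LinearMap.ker (LinearMap.toSpanSingleton R M m) := hI
    have h1 := DFunLike.congr_fun (h.elim (I.liftQ _ hle) 0) (I.mkQ 1)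
    rw [Submodule.mkQ_apply, Submodule.liftQ_apply, LinearMap.toSpanSingleton_apply, one_smul,
      LinearMap.zero_apply] at h1
    exact hm h1

section ShortExactSequence

variable {M₁ M₂ M₃ : Type u} [AddCommGroup M₁] [AddCommGroup M₂] [AddCommGroup M₃] [Module R M₁]
  [Module R M₂] [Module R M₃] {f : M₁ →ₗ[R] M₂} {g : M₂ →ₗ[R] M₃} {k : ℕ}

theorem shortExact_ofHom (hf : Function.Injective f) (hfg : Function.Exact f g)
    (hg : Function.Surjective g) :
    (ModuleCat.shortComplexOfCompEqZero f g hfg.linearMap_comp_eq_zero).ShortExact :=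
  ModuleCat.shortComplex_shortExact _ hfg hf hg

theorem min_extDepth_le_extDepth (hf : Function.Injective f) (hfg : Function.Exact f g)
    (hg : Function.Surjective g) : min (extDepth I M₁) (extDepth I M₃) ≤ extDepth I M₂ := by
  refine ENat.forall_natCast_le_iff_le.1 fun k hk => ?_
  rw [le_min_iff, natCast_le_extDepth_iff, natCast_le_extDepth_iff] at hk
  rw [natCast_le_extDepth_iff]
  exact fun i hi => subsingleton_ext_X₂ _ (shortExact_ofHom hf hfg hg) (hk.1 i hi) (hk.2 i hi)

theorem succ_le_extDepth_left (hf : Function.Injective f) (hfg : Function.Exact f g)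
    (hg : Function.Surjective g) (h₂ : ((k + 1 : ℕ) : ℕ∞) ≤ extDepth I M₂)
    (h₃ : (k : ℕ∞) ≤ extDepth I M₃) : ((k + 1 : ℕ) : ℕ∞) ≤ extDepth I M₁ := by
  rw [natCast_le_extDepth_iff] at h₂ h₃ ⊢
  exact fun i hi => subsingleton_ext_X₁ _ (shortExact_ofHom hf hfg hg) (h₂ i hi)
    fun j hj => h₃ j (by omega)

theorem le_extDepth_right (hf : Function.Injective f) (hfg : Function.Exact f g)
    (hg : Function.Surjective g) (h₂ : (k : ℕ∞) ≤ extDepth I M₂)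
    (h₁ : ((k + 1 : ℕ) : ℕ∞) ≤ extDepth I M₁) : (k : ℕ∞) ≤ extDepth I M₃ := by
  rw [natCast_le_extDepth_iff] at h₁ h₂ ⊢
  exact fun i hi => subsingleton_ext_X₃ _ (shortExact_ofHom hf hfg hg) (h₂ i hi)
    (h₁ (i + 1) (by omega))

theorem extDepth_eq_add_one_of_lt (hf : Function.Injective f) (hfg : Function.Exact f g)
    (hg : Function.Surjective g) (h : extDepth I M₃ < extDepth I M₂) :
    extDepth I M₁ = extDepth I M₃ + 1 := by
  obtain ⟨k, hk⟩ := ENat.ne_top_iff_exists.1 h.ne_top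
  have hM₂ : ((k + 1 : ℕ) : ℕ∞) ≤ extDepth I M₂ := by
    rw [← hk] at h
    exact Order.add_one_le_of_lt h
  refine le_antisymm (not_lt.1 fun hlt => ?_) ?_
  · rw [← hk] at hlt
    have := le_extDepth_right hf hfg hg hM₂ (Order.add_one_le_of_lt hlt)
    rw [← hk, Nat.cast_le] at this
    omega
  · rw [← hk]
    exact succ_le_extDepth_left hf hfg hg hM₂ hk.le

end ShortExactSequence

theorem extDepth_eq_add_one_of_isSMulRegular {N : Type u} [AddCommGroup N] [Module R N]
    {x : R} (hx : x ∈ I) (hreg : IsSMulRegular M x) {g : M →ₗ[R] N}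
    (hxg : Function.Exact (LinearMap.lsmul R M x) g) (hg : Function.Surjective g) :
    extDepth I M = extDepth I N + 1 := by
  have hinj : Function.Injective (LinearMap.lsmul R M x) := hreg
  refine ENat.eq_of_forall_natCast_le_iff fun a => ?_
  cases a with
  | zero => simp
  | succ k =>
    rw [Nat.cast_add_one, ENat.add_le_add_iff_right ENat.one_ne_top, ← Nat.cast_add_one]
    refine ⟨fun h => le_extDepth_right hinj hxg hg
      ((Nat.cast_le.2 k.le_succ).trans h) h, fun h => ?_⟩
    rw [natCast_le_extDepth_iff] at h ⊢
    refine fun i hi => subsingleton_of_forall_eq 0 fun e =>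
      eq_zero_of_comp_mk₀_f_eq_zero _ (shortExact_ofHom hinj hxg hg) (fun j hj => h j (by omega))
        e ?_
    have hann : x ∈ Module.annihilator R (ModuleCat.of R (R ⧸ I)) := by
      simpa [Ideal.annihilator_quotient] using hx
    exact DFunLike.congr_fun (congrArg AddCommGrpCat.Hom.hom
      (Ext.postcomp_smul_id_eq_zero_of_mem_annihilator (M := ModuleCat.of R M) hann i)) e

section Quotients

variable {N₁ N₂ : Submodule R M}

theorem exact_mkQ_prod_mkQ :
    Function.Exact (N₁.mkQ.prod N₂.mkQ) ((Submodule.factor (le_sup_left : N₁ ≤ N₁ ⊔ N₂)).coprod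
      (-Submodule.factor (le_sup_right : N₂ ≤ N₁ ⊔ N₂))) := by
  rintro ⟨p, q⟩
  obtain ⟨p, rfl⟩ := N₁.mkQ_surjective p
  obtain ⟨q, rfl⟩ := N₂.mkQ_surjective q
  constructor
  · intro h
    have hpq : p - q ∈ N₁ ⊔ N₂ := by
      rw [← Submodule.Quotient.mk_eq_zero, Submodule.Quotient.mk_sub, sub_eq_add_neg]
      exact h
    obtain ⟨a, ha, b, hb, hab⟩ := Submodule.mem_sup.1 hpq
    refine ⟨p - a, Prod.ext ((Submodule.Quotient.eq N₁).2 (by simpa using ha))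
      ((Submodule.Quotient.eq N₂).2 ?_)⟩
    rwa [sub_right_comm, ← hab, add_sub_cancel_left]
  · rintro ⟨r, hr⟩
    rw [← hr]
    simp

theorem extDepth_quotient_inf (h₁ : extDepth I (M ⧸ N₁ ⊔ N₂) < extDepth I (M ⧸ N₁))
    (h₂ : extDepth I (M ⧸ N₁ ⊔ N₂) < extDepth I (M ⧸ N₂)) :
    extDepth I (M ⧸ N₁ ⊓ N₂) = extDepth I (M ⧸ N₁ ⊔ N₂) + 1 := by
  have hker : N₁ ⊓ N₂ = LinearMap.ker (N₁.mkQ.prod N₂.mkQ) := by simp [LinearMap.ker_prod]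
  have hinj : Function.Injective ((N₁ ⊓ N₂).liftQ (N₁.mkQ.prod N₂.mkQ) hker.le) :=
    LinearMap.ker_eq_bot.1 (Submodule.ker_liftQ_eq_bot' _ _ hker)
  have hexact : Function.Exact ((N₁ ⊓ N₂).liftQ (N₁.mkQ.prod N₂.mkQ) hker.le)
      ((Submodule.factor (le_sup_left : N₁ ≤ N₁ ⊔ N₂)).coprod
        (-Submodule.factor (le_sup_right : N₂ ≤ N₁ ⊔ N₂))) := by
    rw [LinearMap.exact_iff, Submodule.range_liftQ, exact_mkQ_prod_mkQ.linearMap_ker_eq]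
  refine extDepth_eq_add_one_of_lt hinj hexact (fun q => ?_) ((lt_min h₁ h₂).trans_le
    (min_extDepth_le_extDepth LinearMap.inl_injective .inl_snd LinearMap.snd_surjective))
  obtain ⟨p, rfl⟩ := Submodule.factor_surjective le_sup_left q
  exact ⟨(p, 0), by simp⟩

theorem extDepth_quotient_eq_add_one {J : Ideal R} {x : R} (hx : x ∈ I)
    (hreg : IsSMulRegular (R ⧸ J) x) :
    extDepth I (R ⧸ J) = extDepth I (R ⧸ J ⊔ Ideal.span {x}) + 1 := by
  refine extDepth_eq_add_one_of_isSMulRegular hx hreg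
    (g := Submodule.factor (le_sup_left : J ≤ J ⊔ Ideal.span {x})) (fun q => ?_)
    (Submodule.factor_surjective _)
  obtain ⟨q, rfl⟩ := J.mkQ_surjective q
  rw [Submodule.factor_mk, Submodule.mkQ_apply, Submodule.Quotient.mk_eq_zero, sup_comm,
    Ideal.mem_span_singleton_sup, ← LinearMap.coe_range]
  constructor
  · rintro ⟨c, b, hb, rfl⟩
    refine ⟨J.mkQ c, ?_⟩
    rw [LinearMap.lsmul_apply, ← map_smul]
    refine (Submodule.Quotient.eq J).2 ?_
    rwa [smul_eq_mul, mul_comm, sub_add_cancel_left, neg_mem_iff]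
  · rintro ⟨c, hc⟩
    obtain ⟨c, rfl⟩ := J.mkQ_surjective c
    rw [LinearMap.lsmul_apply, ← map_smul] at hc
    have := (Submodule.Quotient.eq J).1 hc.symm
    exact ⟨c, q - x * c, this, by ring⟩

theorem exists_extDepth_quotient_sup_span_eq [IsNoetherianRing R] {J : Ideal R} {k : ℕ}
    (h : extDepth I (R ⧸ J) = (k + 1 : ℕ)) :
    ∃ x ∈ I, IsSMulRegular (R ⧸ J) x ∧ extDepth I (R ⧸ J ⊔ Ideal.span {x}) = k := by
  obtain ⟨x, hx, hreg⟩ := extDepth_ne_zero_iff_exists_isSMulRegular.1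
    (h ▸ Nat.cast_ne_zero.2 k.succ_ne_zero)
  refine ⟨x, hx, hreg, ENat.add_left_injective_of_ne_top ENat.one_ne_top ?_⟩
  exact (extDepth_quotient_eq_add_one hx hreg).symm.trans (h.trans (Nat.cast_add_one k))

theorem ringKrullDim_quotient_sup_span_add_one_le {J : Ideal R} {x : R}
    (hreg : IsSMulRegular (R ⧸ J) x) :
    ringKrullDim (R ⧸ J ⊔ Ideal.span {x}) + 1 ≤ ringKrullDim (R ⧸ J) := by
  refine ringKrullDim_succ_le_of_surjective (Ideal.Quotient.factor le_sup_left)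
    (Ideal.Quotient.factor_surjective le_sup_left) (r := Ideal.Quotient.mk J x) ?_ ?_
  · refine mem_nonZeroDivisors_iff_left.2 fun q hq => hreg.right_eq_zero_of_smul ?_
    rwa [Algebra.smul_def, Ideal.Quotient.algebraMap_eq]
  · rw [Ideal.Quotient.factor_mk, Ideal.Quotient.eq_zero_iff_mem]
    exact Ideal.mem_sup_right (Ideal.mem_span_singleton_self x)

theorem extDepth_le_ringKrullDim [IsNoetherianRing R] {J : Ideal R} (hJ : J ≤ I) (hI : I ≠ ⊤) :
    (extDepth I (R ⧸ J) : WithBot ℕ∞) ≤ ringKrullDim (R ⧸ J) := by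
  have : Nontrivial (R ⧸ J) := Ideal.Quotient.nontrivial_iff.2 (ne_top_of_le_ne_top hI hJ)
  obtain ⟨d, hd⟩ := WithBot.ne_bot_iff_exists.1
    (ne_bot_of_le_ne_bot WithBot.coe_ne_bot (ringKrullDim_nonneg_of_nontrivial (R := R ⧸ J)))
  rw [← hd, WithBot.coe_le_coe]
  refine ENat.forall_natCast_le_iff_le.1 fun k hk => WithBot.coe_le_coe.1 ?_
  rw [hd]
  clear hd
  induction k generalizing J with
  | zero => exact_mod_cast ringKrullDim_nonneg_of_nontrivial
  | succ k ih =>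
    obtain ⟨x, hx, hreg⟩ := extDepth_ne_zero_iff_exists_isSMulRegular.1
      (ne_bot_of_le_ne_bot (by simp) hk)
    have hJx : J ⊔ Ideal.span {x} ≤ I := sup_le hJ (by simpa [Ideal.span_le] using hx)
    have : Nontrivial (R ⧸ J ⊔ Ideal.span {x}) :=
      Ideal.Quotient.nontrivial_iff.2 (ne_top_of_le_ne_top hI hJx)
    rw [extDepth_quotient_eq_add_one hx hreg, Nat.cast_add_one,
      ENat.add_le_add_iff_right ENat.one_ne_top] at hk
    refine le_trans ?_ (ringKrullDim_quotient_sup_span_add_one_le hreg)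
    push_cast
    gcongr
    exact ih hJx this hk

theorem exists_isRegular_iff_le_extDepth [IsNoetherianRing R] [Module.Finite R M]
    (hM : I • (⊤ : Submodule R M) < ⊤) {k : ℕ} :
    (∃ rs : List R, rs.length = k ∧ (∀ r ∈ rs, r ∈ I) ∧ RingTheory.Sequence.IsRegular M rs) ↔
      (k : ℕ∞) ≤ extDepth I M := by
  have hsupp : Module.support R (R ⧸ I) = PrimeSpectrum.zeroLocus I := by
    rw [Module.support_eq_zeroLocus, Ideal.annihilator_quotient]
  rw [natCast_le_extDepth_iff]
  constructor
  · rintro ⟨rs, rfl, hmem, hreg⟩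
    exact ModuleCat.subsingleton_ext_of_exists_isRegular I (ModuleCat.of R (R ⧸ I)) hsupp.le
      (ModuleCat.of R M) hM rs hmem hreg
  · exact ModuleCat.exists_isRegular_of_exists_subsingleton_ext I k (ModuleCat.of R M) hM
      (ModuleCat.of R (R ⧸ I)) hsupp

theorem extDepth_quotient_self (hI : I ≠ ⊤) : extDepth I (R ⧸ I) = 0 := by
  refine extDepth_eq_zero_iff.2 ⟨I.mkQ 1, ?_, fun z hz => ?_⟩
  · rwa [Submodule.mkQ_apply, Ne, Submodule.Quotient.mk_eq_zero, ← Ideal.eq_top_iff_one]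
  · rw [← map_smul, smul_eq_mul, mul_one]
    exact (Submodule.Quotient.mk_eq_zero I).2 hz

theorem smul_top_quotient_lt_top {J : Ideal R} (hJ : J ≤ I) (hI : I ≠ ⊤) :
    I • (⊤ : Submodule R (R ⧸ J)) < ⊤ := by
  refine lt_top_iff_ne_top.2 fun htop => hI ?_
  have hcomap := Submodule.comap_smul_top_of_surjective I J.mkQ J.mkQ_surjective
  rwa [htop, Submodule.comap_top, Submodule.ker_mkQ, smul_eq_mul, Ideal.mul_top,
    sup_eq_left.2 hJ, eq_comm] at hcomap

end Quotients

end ExtDepth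

section PolyDepth

variable {K : Type} [Field K] {σ : Type} {A : Ideal (MvPolynomial σ K)}

instance idealOfVars_isMaximal : (idealOfVars σ K).IsMaximal := by
  have h : idealOfVars σ K = RingHom.ker (constantCoeff (σ := σ) (R := K)) := by
    ext p
    rw [← pow_one (idealOfVars σ K), mem_pow_idealOfVars_iff', RingHom.mem_ker,
      constantCoeff_eq]
    simp [Finsupp.degree_eq_zero_iff]
  rw [h]
  exact RingHom.ker_isMaximal_of_surjective _ fun c => ⟨C c, constantCoeff_C σ c⟩

theorem isSMulRegular_X_quotient_span_X {s : Set σ} {i : σ} (hi : i ∉ s) :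
    IsSMulRegular (MvPolynomial σ K ⧸ Ideal.span (X '' s : Set (MvPolynomial σ K)))
      (X i : MvPolynomial σ K) := by
  rw [isSMulRegular_quotient_iff_mem_of_smul_mem]
  intro p hp
  rw [smul_eq_mul] at hp
  rw [mem_ideal_span_X_image] at hp ⊢
  intro m hm
  obtain ⟨j, hj, hj0⟩ := hp (Finsupp.single i 1 + m) (by
    rw [mem_support_iff, coeff_X_mul]
    exact mem_support_iff.1 hm)
  have hij : i ≠ j := by
    rintro rfl
    exact hi hj
  exact ⟨j, hj, by simpa [Finsupp.single_apply, hij] using hj0⟩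

theorem extDepth_quotient_span_X_add_card (t : Finset σ) :
    extDepth (idealOfVars σ K) (MvPolynomial σ K ⧸
      Ideal.span (X '' (t : Set σ) : Set (MvPolynomial σ K))) + t.card =
      extDepth (idealOfVars σ K) (MvPolynomial σ K ⧸ (⊥ : Ideal (MvPolynomial σ K))) := by
  classical
  induction t using Finset.induction_on with
  | empty =>
    rw [Finset.coe_empty, Set.image_empty, Ideal.span_empty, Finset.card_empty, Nat.cast_zero,
      add_zero]
  | insert i t hi ih =>
    have hX : (X i : MvPolynomial σ K) ∈ idealOfVars σ K := Ideal.subset_span ⟨i, rfl⟩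
    rw [← ih, extDepth_quotient_eq_add_one hX
      (isSMulRegular_X_quotient_span_X (mt Finset.mem_coe.1 hi)), Finset.coe_insert,
      Set.image_insert_eq, Ideal.span_insert, sup_comm, Finset.card_insert_of_notMem hi,
      add_assoc, Nat.cast_add_one, add_comm 1]

theorem extDepth_idealOfVars_eq_zero_iff : extDepth (idealOfVars σ K) (MvPolynomial σ K ⧸ A) = 0 ↔
    ∃ s ∉ A, ∀ i, X i * s ∈ A := by
  rw [extDepth_eq_zero_iff, (A.mkQ_surjective).exists]
  refine exists_congr fun s => and_congr (Submodule.Quotient.mk_eq_zero A).not ?_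
  change idealOfVars σ K ≤ LinearMap.ker (LinearMap.toSpanSingleton _ _ (A.mkQ s)) ↔ _
  rw [idealOfVars, Ideal.span_le, Set.range_subset_iff]
  exact forall_congr' fun i => Submodule.Quotient.mk_eq_zero A (x := X i * s)

variable [Finite σ]

theorem extDepth_quotient_bot :
    extDepth (idealOfVars σ K) (MvPolynomial σ K ⧸ (⊥ : Ideal (MvPolynomial σ K))) =
      Nat.card σ := by
  have := Fintype.ofFinite σ
  have hspan : Ideal.span (X '' ((Finset.univ : Finset σ) : Set σ)) = idealOfVars σ K := by
    rw [Finset.coe_univ, Set.image_univ, idealOfVars]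
  rw [← extDepth_quotient_span_X_add_card Finset.univ, hspan,
    extDepth_quotient_self Ideal.IsPrime.ne_top', zero_add, Finset.card_univ,
    Nat.card_eq_fintype_card]

theorem ringKrullDim_mvPolynomial : ringKrullDim (MvPolynomial σ K) = (Nat.card σ : ℕ∞) := by
  rw [MvPolynomial.ringKrullDim_of_isNoetherianRing, ringKrullDim_eq_zero_of_field, zero_add]
  rfl

theorem extDepth_quotient_le_card (hA : A ≤ idealOfVars σ K) :
    extDepth (idealOfVars σ K) (MvPolynomial σ K ⧸ A) ≤ Nat.card σ := by
  have h := (extDepth_le_ringKrullDim hA Ideal.IsPrime.ne_top').trans (ringKrullDim_quotient_le A)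
  rwa [ringKrullDim_mvPolynomial, WithBot.coe_le_coe] at h

theorem natCast_polyDepth (hA : A ≤ idealOfVars σ K) :
    (polyDepth K A : ℕ∞) = extDepth (idealOfVars σ K) (MvPolynomial σ K ⧸ A) := by
  obtain ⟨d, hd⟩ := ENat.ne_top_iff_exists.1
    (ne_top_of_le_ne_top (ENat.natCast_ne_top _) (extDepth_quotient_le_card hA))
  have hlt := smul_top_quotient_lt_top hA Ideal.IsPrime.ne_top'
  have hset : {k | ∃ rs : List (MvPolynomial σ K), rs.length = k ∧
      (∀ r ∈ rs, r ∈ idealOfVars σ K) ∧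
      RingTheory.Sequence.IsRegular (MvPolynomial σ K ⧸ A) rs} = Set.Iic d := by
    ext k
    rw [Set.mem_ofPred_eq, exists_isRegular_iff_le_extDepth hlt, ← hd, Nat.cast_le, Set.mem_Iic]
  rw [← hd, Nat.cast_inj]
  exact (congrArg sSup hset).trans csSup_Iic

theorem polyDepth_bot : polyDepth K (⊥ : Ideal (MvPolynomial σ K)) = Nat.card σ := by
  rw [← Nat.cast_inj (R := ℕ∞), natCast_polyDepth bot_le, extDepth_quotient_bot]

theorem polyDepth_lt_card (hA : A ≤ idealOfVars σ K) (hA₀ : A ≠ ⊥) :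
    polyDepth K A < Nat.card σ := by
  obtain ⟨x, hx, hx₀⟩ := Submodule.exists_mem_ne_zero_of_ne_bot hA₀
  have hdim : ringKrullDim (MvPolynomial σ K ⧸ A) + 1 ≤ ringKrullDim (MvPolynomial σ K) :=
    ringKrullDim_succ_le_of_surjective (Ideal.Quotient.mk A) Ideal.Quotient.mk_surjective
      (mem_nonZeroDivisors_of_ne_zero hx₀) (Ideal.Quotient.eq_zero_iff_mem.2 hx)
  have hle := (add_le_add_left (extDepth_le_ringKrullDim hA Ideal.IsPrime.ne_top') 1).trans hdim
  rw [ringKrullDim_mvPolynomial, ← natCast_polyDepth hA] at hle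
  exact_mod_cast hle

end PolyDepth

section TensorProduct

open scoped TensorProduct

variable {K : Type*} [Field K]

theorem tmul_eq_zero_iff {V W : Type*} [AddCommGroup V] [Module K V] [AddCommGroup W]
    [Module K W] {v : V} {w : W} : v ⊗ₜ[K] w = 0 ↔ v = 0 ∨ w = 0 := by
  refine ⟨fun h => or_iff_not_imp_left.2 fun hv => ?_, by rintro (rfl | rfl) <;> simp⟩
  obtain ⟨f, hf⟩ := not_forall.1 (mt (Module.forall_dual_apply_eq_zero_iff K v).1 hv)
  have hfw := congrArg (TensorProduct.lid K W ∘ f.rTensor W) h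
  rw [Function.comp_apply, LinearMap.rTensor_tmul, TensorProduct.lid_tmul] at hfw
  exact (smul_eq_zero.1 (by simpa using hfw)).resolve_left hf

variable {U V : Type*} [CommRing U] [Algebra K U] [CommRing V] [Algebra K V]

theorem isSMulRegular_tmul_one {u : U} (hu : IsSMulRegular U u) :
    IsSMulRegular (U ⊗[K] V) (u ⊗ₜ[K] (1 : V)) :=
  hu.of_flat (S := U ⊗[K] V)

theorem isSMulRegular_one_tmul {v : V} (hv : IsSMulRegular V v) :
    IsSMulRegular (U ⊗[K] V) ((1 : U) ⊗ₜ[K] v) := by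
  have hmul : LinearMap.mulLeft K ((1 : U) ⊗ₜ[K] v) = (LinearMap.mulLeft K v).lTensor U := by
    ext a b
    simp
  have hinj :=
    Module.Flat.lTensor_preserves_injective_linearMap (M := U) (LinearMap.mulLeft K v) hv
  rwa [← hmul] at hinj

theorem map_includeLeft_mul_map_includeRight (A : Ideal U) (B : Ideal V) :
    A.map (Algebra.TensorProduct.includeLeft : U →ₐ[K] U ⊗[K] V) *
        B.map (Algebra.TensorProduct.includeRight : V →ₐ[K] U ⊗[K] V) =
      A.map (Algebra.TensorProduct.includeLeft : U →ₐ[K] U ⊗[K] V) ⊓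
        B.map (Algebra.TensorProduct.includeRight : V →ₐ[K] U ⊗[K] V) := by
  refine le_antisymm Ideal.mul_le_inf fun x hx => ?_
  -- A `K`-linear projection `p` of `U` onto `A` induces a map `p ⊗ V` that fixes `A ⊗ V` pointwise
  -- and sends `U ⊗ B` into `A ⊗ B`.
  obtain ⟨p, hp⟩ := (A.restrictScalars K).subtype.exists_leftInverse_of_injective
    (Submodule.ker_subtype _)
  obtain ⟨y, rfl⟩ := (Ideal.map_includeLeft_eq (R := K) (B := V) A).le hx.1
  obtain ⟨z, hz⟩ := (Ideal.map_includeRight_eq (R := K) (A := U) B).le hx.2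
  have hfix : p.rTensor V ((A.restrictScalars K).subtype.rTensor V y) = y := by
    rw [← LinearMap.comp_apply, ← LinearMap.rTensor_comp, hp, LinearMap.rTensor_id,
      LinearMap.id_apply]
  rw [← hfix, ← hz]
  clear hz hx hfix
  induction z with
  | zero => simp
  | add z w hz hw => simpa only [map_add] using add_mem hz hw
  | tmul u b =>
    rw [LinearMap.lTensor_tmul, LinearMap.rTensor_tmul, LinearMap.rTensor_tmul,
      ← mul_one ((A.restrictScalars K).subtype (p u)), ← one_mul ((B.restrictScalars K).subtype b),
      ← Algebra.TensorProduct.tmul_mul_tmul]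
    exact Ideal.mul_mem_mul (Ideal.mem_map_of_mem _ (p u).2) (Ideal.mem_map_of_mem _ b.2)

end TensorProduct

section DisjointVariables

open scoped TensorProduct

variable {K : Type} [Field K] {σ τ : Type}

/-- The extension of an ideal to the polynomial ring with additional variables `τ`. -/
noncomputable abbrev extendLeft (τ : Type) (A : Ideal (MvPolynomial σ K)) :
    Ideal (MvPolynomial (σ ⊕ τ) K) := A.map (rename (Sum.inl : σ → σ ⊕ τ))

/-- The extension of an ideal to the polynomial ring with additional variables `σ`. -/
noncomputable abbrev extendRight (σ : Type) (B : Ideal (MvPolynomial τ K)) :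
    Ideal (MvPolynomial (σ ⊕ τ) K) := B.map (rename (Sum.inr : τ → σ ⊕ τ))

/-- The projection of `K[σ ⊕ τ]` onto `K[σ]/A ⊗ K[τ]/B`. -/
noncomputable def toTensorQuotient (A : Ideal (MvPolynomial σ K)) (B : Ideal (MvPolynomial τ K)) :
    MvPolynomial (σ ⊕ τ) K →ₐ[K] (MvPolynomial σ K ⧸ A) ⊗[K] (MvPolynomial τ K ⧸ B) :=
  (Algebra.TensorProduct.map (Ideal.Quotient.mkₐ K A) (Ideal.Quotient.mkₐ K B)).comp
    (tensorEquivSum K σ τ K).symm.toAlgHom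

theorem tensorEquivSum_comp_includeLeft :
    (tensorEquivSum K σ τ K).toAlgHom.comp Algebra.TensorProduct.includeLeft =
      rename (Sum.inl : σ → σ ⊕ τ) := by
  ext i
  simp

theorem tensorEquivSum_comp_includeRight :
    (tensorEquivSum K σ τ K).toAlgHom.comp Algebra.TensorProduct.includeRight =
      rename (Sum.inr : τ → σ ⊕ τ) := by
  ext i
  simp

theorem tensorEquivSum_tmul (f : MvPolynomial σ K) (g : MvPolynomial τ K) :
    tensorEquivSum K σ τ K (f ⊗ₜ g) = rename Sum.inl f * rename Sum.inr g := by
  rw [← tensorEquivSum_comp_includeLeft, ← tensorEquivSum_comp_includeRight]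
  simp [← map_mul]

variable {A : Ideal (MvPolynomial σ K)} {B : Ideal (MvPolynomial τ K)}

theorem toTensorQuotient_mul (f : MvPolynomial σ K) (g : MvPolynomial τ K) :
    toTensorQuotient A B (rename Sum.inl f * rename Sum.inr g) =
      Ideal.Quotient.mk A f ⊗ₜ Ideal.Quotient.mk B g := by
  rw [← tensorEquivSum_tmul]
  simp [toTensorQuotient]

theorem ker_toTensorQuotient :
    RingHom.ker (toTensorQuotient A B) = extendLeft τ A ⊔ extendRight σ B := by
  have hker {ι : Type} (J : Ideal (MvPolynomial ι K)) :
      RingHom.ker (Ideal.Quotient.mkₐ K J) = J := Ideal.mk_ker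
  have hcomap : RingHom.ker (toTensorQuotient A B) = (RingHom.ker (Algebra.TensorProduct.map
      (Ideal.Quotient.mkₐ K A) (Ideal.Quotient.mkₐ K B))).map (tensorEquivSum K σ τ K).toAlgHom :=
    Ideal.comap_symm (I := RingHom.ker (Algebra.TensorProduct.map (Ideal.Quotient.mkₐ K A)
      (Ideal.Quotient.mkₐ K B))) (tensorEquivSum K σ τ K).toRingEquiv
  rw [hcomap, Algebra.TensorProduct.map_ker _ _ (Ideal.Quotient.mkₐ_surjective K A)
    (Ideal.Quotient.mkₐ_surjective K B), Ideal.map_sup, Ideal.map_mapₐ, Ideal.map_mapₐ,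
    tensorEquivSum_comp_includeLeft, tensorEquivSum_comp_includeRight, hker, hker]

theorem rename_mul_rename_mem_iff {f : MvPolynomial σ K} {g : MvPolynomial τ K} :
    rename Sum.inl f * rename Sum.inr g ∈ extendLeft τ A ⊔ extendRight σ B ↔ f ∈ A ∨ g ∈ B := by
  rw [← ker_toTensorQuotient, RingHom.mem_ker, toTensorQuotient_mul, tmul_eq_zero_iff,
    Ideal.Quotient.eq_zero_iff_mem, Ideal.Quotient.eq_zero_iff_mem]

theorem extendLeft_mul_extendRight :
    extendLeft τ A * extendRight σ B = extendLeft τ A ⊓ extendRight σ B := by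
  have hinf {P Q : Ideal (MvPolynomial σ K ⊗[K] MvPolynomial τ K)} :
      (P ⊓ Q).map (tensorEquivSum K σ τ K).toAlgHom =
        P.map (tensorEquivSum K σ τ K).toAlgHom ⊓ Q.map (tensorEquivSum K σ τ K).toAlgHom :=
    (tensorEquivSum K σ τ K).toRingEquiv.idealComapOrderIso.symm.map_inf P Q
  have h := congrArg (Ideal.map (tensorEquivSum K σ τ K).toAlgHom)
    (map_includeLeft_mul_map_includeRight A B)
  rwa [Ideal.map_mul, hinf, Ideal.map_mapₐ, Ideal.map_mapₐ, tensorEquivSum_comp_includeLeft,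
    tensorEquivSum_comp_includeRight] at h

theorem rename_mul_rename_mem_mul_iff {f : MvPolynomial σ K} {g : MvPolynomial τ K}
    (hf : f ≠ 0) (hg : g ≠ 0) :
    rename Sum.inl f * rename Sum.inr g ∈ extendLeft τ A * extendRight σ B ↔ f ∈ A ∧ g ∈ B := by
  have hl := rename_mul_rename_mem_iff (A := A) (B := ⊥) (f := f) (g := g)
  have hr := rename_mul_rename_mem_iff (A := ⊥) (B := B) (f := f) (g := g)
  rw [extendRight, Ideal.map_bot, sup_bot_eq, Ideal.mem_bot, or_iff_left hg] at hl
  rw [extendLeft, Ideal.map_bot, bot_sup_eq, Ideal.mem_bot, or_iff_right hf] at hr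
  rw [extendLeft_mul_extendRight, Ideal.mem_inf, hl, hr]

theorem isSMulRegular_of_isSMulRegular_toTensorQuotient {p : MvPolynomial (σ ⊕ τ) K}
    (hp : IsSMulRegular ((MvPolynomial σ K ⧸ A) ⊗[K] (MvPolynomial τ K ⧸ B))
      (toTensorQuotient A B p)) :
    IsSMulRegular (MvPolynomial (σ ⊕ τ) K ⧸ extendLeft τ A ⊔ extendRight σ B) p := by
  rw [isSMulRegular_quotient_iff_mem_of_smul_mem, ← ker_toTensorQuotient]
  intro q hq
  rw [RingHom.mem_ker, smul_eq_mul, map_mul] at hq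
  exact hp (hq.trans (mul_zero _).symm)

theorem isSMulRegular_rename_inl {x : MvPolynomial σ K}
    (hx : IsSMulRegular (MvPolynomial σ K ⧸ A) x) :
    IsSMulRegular (MvPolynomial (σ ⊕ τ) K ⧸ extendLeft τ A ⊔ extendRight σ B)
      (rename Sum.inl x : MvPolynomial (σ ⊕ τ) K) := by
  refine isSMulRegular_of_isSMulRegular_toTensorQuotient ?_
  rw [← mul_one (rename Sum.inl x), ← map_one (rename (Sum.inr : τ → σ ⊕ τ)),
    toTensorQuotient_mul, map_one]
  exact isSMulRegular_tmul_one hx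

theorem isSMulRegular_rename_inr {x : MvPolynomial τ K}
    (hx : IsSMulRegular (MvPolynomial τ K ⧸ B) x) :
    IsSMulRegular (MvPolynomial (σ ⊕ τ) K ⧸ extendLeft τ A ⊔ extendRight σ B)
      (rename Sum.inr x : MvPolynomial (σ ⊕ τ) K) := by
  refine isSMulRegular_of_isSMulRegular_toTensorQuotient ?_
  rw [← one_mul (rename Sum.inr x), ← map_one (rename (Sum.inl : σ → σ ⊕ τ)),
    toTensorQuotient_mul, map_one]
  exact isSMulRegular_one_tmul hx

theorem idealOfVars_sum :
    idealOfVars (σ ⊕ τ) K = extendLeft τ (idealOfVars σ K) ⊔ extendRight σ (idealOfVars τ K) := by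
  simp_rw [extendLeft, extendRight, idealOfVars, Ideal.map_span, ← Ideal.span_union,
    ← Set.range_comp, ← Set.Sum.elim_range]
  congr 2
  ext (i | i) <;> simp

theorem extendLeft_le (hA : A ≤ idealOfVars σ K) : extendLeft τ A ≤ idealOfVars (σ ⊕ τ) K :=
  idealOfVars_sum (K := K) ▸ (Ideal.map_mono hA).trans le_sup_left

theorem extendRight_le (hB : B ≤ idealOfVars τ K) : extendRight σ B ≤ idealOfVars (σ ⊕ τ) K :=
  idealOfVars_sum (K := K) ▸ (Ideal.map_mono hB).trans le_sup_right

theorem rename_inl_mem {x : MvPolynomial σ K} (hx : x ∈ idealOfVars σ K) :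
    rename Sum.inl x ∈ idealOfVars (σ ⊕ τ) K :=
  extendLeft_le le_rfl (Ideal.mem_map_of_mem _ hx)

theorem rename_inr_mem {x : MvPolynomial τ K} (hx : x ∈ idealOfVars τ K) :
    rename Sum.inr x ∈ idealOfVars (σ ⊕ τ) K :=
  extendRight_le le_rfl (Ideal.mem_map_of_mem _ hx)

theorem extDepth_sup_eq_zero (hA : extDepth (idealOfVars σ K) (MvPolynomial σ K ⧸ A) = 0)
    (hB : extDepth (idealOfVars τ K) (MvPolynomial τ K ⧸ B) = 0) :
    extDepth (idealOfVars (σ ⊕ τ) K)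
      (MvPolynomial (σ ⊕ τ) K ⧸ extendLeft τ A ⊔ extendRight σ B) = 0 := by
  rw [extDepth_idealOfVars_eq_zero_iff] at hA hB ⊢
  obtain ⟨s, hs, hsX⟩ := hA
  obtain ⟨t, ht, htX⟩ := hB
  refine ⟨rename Sum.inl s * rename Sum.inr t, by simp [rename_mul_rename_mem_iff, hs, ht], ?_⟩
  rintro (i | i)
  · rw [← mul_assoc, ← rename_X Sum.inl, ← map_mul, rename_mul_rename_mem_iff]
    exact Or.inl (hsX i)
  · rw [mul_left_comm, ← rename_X Sum.inr, ← map_mul, rename_mul_rename_mem_iff]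
    exact Or.inr (htX i)

theorem extendLeft_sup_span (x : MvPolynomial σ K) :
    extendLeft τ (A ⊔ Ideal.span {x}) ⊔ extendRight σ B =
      (extendLeft τ A ⊔ extendRight σ B) ⊔ Ideal.span {rename Sum.inl x} := by
  rw [extendLeft, Ideal.map_sup, Ideal.map_span, Set.image_singleton, sup_right_comm]

theorem extendRight_sup_span (x : MvPolynomial τ K) :
    extendLeft τ A ⊔ extendRight σ (B ⊔ Ideal.span {x}) =
      (extendLeft τ A ⊔ extendRight σ B) ⊔ Ideal.span {rename Sum.inr x} := by
  rw [extendRight, Ideal.map_sup, Ideal.map_span, Set.image_singleton, sup_assoc]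

variable [Finite σ] [Finite τ]

theorem extDepth_sup_eq_add {a b : ℕ}
    (hA : extDepth (idealOfVars σ K) (MvPolynomial σ K ⧸ A) = a)
    (hB : extDepth (idealOfVars τ K) (MvPolynomial τ K ⧸ B) = b) :
    extDepth (idealOfVars (σ ⊕ τ) K)
      (MvPolynomial (σ ⊕ τ) K ⧸ extendLeft τ A ⊔ extendRight σ B) = (a + b : ℕ) := by
  induction a generalizing A with
  | zero =>
    rw [zero_add]
    induction b generalizing B with
    | zero => exact extDepth_sup_eq_zero hA hB
    | succ b ih =>
      obtain ⟨x, hx, hreg, hB⟩ := exists_extDepth_quotient_sup_span_eq hB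
      rw [extDepth_quotient_eq_add_one (rename_inr_mem hx) (isSMulRegular_rename_inr hreg),
        ← extendRight_sup_span, ih hB, Nat.cast_add_one]
  | succ a ih =>
    obtain ⟨x, hx, hreg, hA⟩ := exists_extDepth_quotient_sup_span_eq hA
    rw [extDepth_quotient_eq_add_one (rename_inl_mem hx) (isSMulRegular_rename_inl hreg),
      ← extendLeft_sup_span, ih hA, Nat.add_right_comm, Nat.cast_add_one]

theorem polyDepth_sup (hA : A ≤ idealOfVars σ K) (hB : B ≤ idealOfVars τ K) :
    polyDepth K (extendLeft τ A ⊔ extendRight σ B) = polyDepth K A + polyDepth K B := by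
  rw [← Nat.cast_inj (R := ℕ∞), natCast_polyDepth (sup_le (extendLeft_le hA) (extendRight_le hB))]
  exact extDepth_sup_eq_add (natCast_polyDepth hA).symm (natCast_polyDepth hB).symm

theorem polyDepth_extendLeft (hA : A ≤ idealOfVars σ K) :
    polyDepth K (extendLeft τ A) = polyDepth K A + Nat.card τ := by
  have h := polyDepth_sup (τ := τ) hA bot_le
  rwa [extendRight, Ideal.map_bot, sup_bot_eq, polyDepth_bot] at h

theorem polyDepth_extendRight (hB : B ≤ idealOfVars τ K) :
    polyDepth K (extendRight σ B) = Nat.card σ + polyDepth K B := by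
  have h := polyDepth_sup (σ := σ) bot_le hB
  rwa [extendLeft, Ideal.map_bot, bot_sup_eq, polyDepth_bot] at h

theorem polyDepth_mul (hA : A ≤ idealOfVars σ K) (hA₀ : A ≠ ⊥) (hB : B ≤ idealOfVars τ K)
    (hB₀ : B ≠ ⊥) : polyDepth K (extendLeft τ A * extendRight σ B) =
      polyDepth K A + polyDepth K B + 1 := by
  have hL := extendLeft_le (τ := τ) hA
  have hR := extendRight_le (σ := σ) hB
  have hltA := polyDepth_lt_card hA hA₀
  have hltB := polyDepth_lt_card hB hB₀
  rw [extendLeft_mul_extendRight, ← polyDepth_sup hA hB, ← Nat.cast_inj (R := ℕ∞),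
    Nat.cast_add_one, natCast_polyDepth (inf_le_left.trans hL), natCast_polyDepth (sup_le hL hR)]
  apply extDepth_quotient_inf
  · rw [← natCast_polyDepth hL, ← natCast_polyDepth (sup_le hL hR), Nat.cast_lt,
      polyDepth_sup hA hB, polyDepth_extendLeft hA]
    omega
  · rw [← natCast_polyDepth hR, ← natCast_polyDepth (sup_le hL hR), Nat.cast_lt,
      polyDepth_sup hA hB, polyDepth_extendRight hB]
    omega

end DisjointVariables

section SquarefreePowers

variable {K : Type} [Field K] {σ τ : Type} {F : Finset σ} {A I : Ideal (MvPolynomial σ K)}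
  {B J : Ideal (MvPolynomial τ K)} {k : ℕ}

theorem sqMon_ne_zero (F : Finset σ) : sqMon K F ≠ 0 :=
  Finset.prod_ne_zero_iff.2 fun i _ => X_ne_zero i

theorem sqMon_empty : sqMon K (∅ : Finset σ) = 1 := Finset.prod_empty

theorem sqMon_mem_idealOfVars (hF : F.Nonempty) : sqMon K F ∈ idealOfVars σ K := by
  obtain ⟨i, hi⟩ := hF
  exact Ideal.mem_of_dvd _ (Finset.dvd_prod_of_mem _ hi) (Ideal.subset_span ⟨i, rfl⟩)

theorem sqMon_disjSum (F : Finset σ) (G : Finset τ) :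
    sqMon K (F.disjSum G) = rename Sum.inl (sqMon K F) * rename Sum.inr (sqMon K G) := by
  simp [sqMon, Finset.prod_disjSum]

theorem sqMon_disjSum_mem_mul_iff {G : Finset τ} :
    sqMon K (F.disjSum G) ∈ extendLeft τ A * extendRight σ B ↔ sqMon K F ∈ A ∧ sqMon K G ∈ B := by
  rw [sqMon_disjSum, rename_mul_rename_mem_mul_iff (sqMon_ne_zero F) (sqMon_ne_zero G)]

theorem sqMon_mem_mul_iff {F : Finset (σ ⊕ τ)} :
    sqMon K F ∈ extendLeft τ A * extendRight σ B ↔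
      sqMon K F.toLeft ∈ A ∧ sqMon K F.toRight ∈ B := by
  rw [← sqMon_disjSum_mem_mul_iff, Finset.toLeft_disjSum_toRight]

theorem sqMon_mem_sqfreePower (hF : sqMon K F ∈ I ^ k) : sqMon K F ∈ sqfreePower K I k :=
  Ideal.subset_span ⟨F, rfl, hF⟩

theorem sqfreePower_le_iff : sqfreePower K I k ≤ A ↔ ∀ F, sqMon K F ∈ I ^ k → sqMon K F ∈ A := by
  refine Ideal.span_le.trans ⟨fun h F hF => h ⟨F, rfl, hF⟩, ?_⟩
  rintro h _ ⟨F, rfl, hF⟩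
  exact h F hF

theorem sqfreePower_ne_bot_iff : sqfreePower K I k ≠ ⊥ ↔ ∃ F, sqMon K F ∈ I ^ k := by
  simp only [Ne, ← le_bot_iff, sqfreePower_le_iff, Ideal.mem_bot, sqMon_ne_zero, imp_false,
    not_forall, not_not]

theorem exists_sqMon_mem_sqfreePower (h : sqfreePower K I k ≠ ⊥) :
    ∃ F, sqMon K F ∈ sqfreePower K I k :=
  (sqfreePower_ne_bot_iff.1 h).imp fun _ => sqMon_mem_sqfreePower

theorem sqfreePower_antitone (I : Ideal (MvPolynomial σ K)) : Antitone (sqfreePower K I) :=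
  fun _ _ hkl => sqfreePower_le_iff.2 fun _ hF =>
    sqMon_mem_sqfreePower (Ideal.pow_le_pow_right hkl hF)

theorem sqfreePower_top (k : ℕ) : sqfreePower K (⊤ : Ideal (MvPolynomial σ K)) k = ⊤ := by
  rw [Ideal.eq_top_iff_one, ← sqMon_empty]
  exact sqMon_mem_sqfreePower (by rw [Ideal.top_pow]; exact Submodule.mem_top)

theorem sqfreePower_le_idealOfVars (hI : I ≠ ⊤) (hk : 1 ≤ k) :
    sqfreePower K I k ≤ idealOfVars σ K := by
  refine sqfreePower_le_iff.2 fun F hF => sqMon_mem_idealOfVars ?_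
  rw [Finset.nonempty_iff_ne_empty]
  rintro rfl
  exact hI ((Ideal.eq_top_iff_one I).2 (sqMon_empty (K := K) ▸ Ideal.pow_le_self (by omega) hF))

theorem extendLeft_mul_extendRight_pow (I : Ideal (MvPolynomial σ K))
    (J : Ideal (MvPolynomial τ K)) (k : ℕ) :
    (extendLeft τ I * extendRight σ J) ^ k = extendLeft τ (I ^ k) * extendRight σ (J ^ k) := by
  rw [mul_pow, extendLeft, extendRight, ← Ideal.map_pow, ← Ideal.map_pow]

theorem sqfreePower_mul (I : Ideal (MvPolynomial σ K)) (J : Ideal (MvPolynomial τ K)) (k : ℕ) :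
    sqfreePower K (extendLeft τ I * extendRight σ J) k =
      extendLeft τ (sqfreePower K I k) * extendRight σ (sqfreePower K J k) := by
  apply le_antisymm
  · refine sqfreePower_le_iff.2 fun F hF => ?_
    rw [extendLeft_mul_extendRight_pow, sqMon_mem_mul_iff] at hF
    exact sqMon_mem_mul_iff.2 (hF.imp sqMon_mem_sqfreePower sqMon_mem_sqfreePower)
  · rw [extendLeft, extendRight, sqfreePower, sqfreePower, Ideal.map_span, Ideal.map_span,
      Ideal.span_mul_span', Ideal.span_le]
    rintro _ ⟨_, ⟨_, ⟨F, rfl, hF⟩, rfl⟩, _, ⟨_, ⟨G, rfl, hG⟩, rfl⟩, rfl⟩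
    refine Ideal.subset_span ⟨F.disjSum G, (sqMon_disjSum F G).symm, ?_⟩
    rw [extendLeft_mul_extendRight_pow]
    exact Ideal.mul_mem_mul (Ideal.mem_map_of_mem _ hF) (Ideal.mem_map_of_mem _ hG)

theorem sqfreePower_ne_bot_of_mul_ne_bot
    (h : sqfreePower K (extendLeft τ I * extendRight σ J) k ≠ ⊥) :
    sqfreePower K I k ≠ ⊥ ∧ sqfreePower K J k ≠ ⊥ := by
  obtain ⟨E, hE⟩ := sqfreePower_ne_bot_iff.1 h
  rw [extendLeft_mul_extendRight_pow, sqMon_mem_mul_iff] at hE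
  exact hE.imp (fun h => sqfreePower_ne_bot_iff.2 ⟨_, h⟩) fun h => sqfreePower_ne_bot_iff.2 ⟨_, h⟩

theorem indeg_mul (hA : ∃ F, sqMon K F ∈ A) (hB : ∃ G, sqMon K G ∈ B) :
    indeg K (extendLeft τ A * extendRight σ B) = indeg K A + indeg K B := by
  obtain ⟨F, hFc, hF⟩ : indeg K A ∈ {d | ∃ F : Finset σ, F.card = d ∧ sqMon K F ∈ A} :=
    Nat.sInf_mem (hA.imp' Finset.card fun F hF => ⟨F, rfl, hF⟩)
  obtain ⟨G, hGc, hG⟩ : indeg K B ∈ {d | ∃ G : Finset τ, G.card = d ∧ sqMon K G ∈ B} :=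
    Nat.sInf_mem (hB.imp' Finset.card fun G hG => ⟨G, rfl, hG⟩)
  have hFG : indeg K A + indeg K B ∈ {d | ∃ E : Finset (σ ⊕ τ), E.card = d ∧
      sqMon K E ∈ extendLeft τ A * extendRight σ B} :=
    ⟨F.disjSum G, by rw [Finset.card_disjSum, hFc, hGc], sqMon_disjSum_mem_mul_iff.2 ⟨hF, hG⟩⟩
  refine le_antisymm (Nat.sInf_le hFG) (le_csInf ⟨_, hFG⟩ ?_)
  rintro _ ⟨E, rfl, hE⟩
  rw [sqMon_mem_mul_iff] at hE
  rw [← Finset.card_toLeft_add_card_toRight]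
  exact add_le_add (Nat.sInf_le ⟨_, rfl, hE.1⟩) (Nat.sInf_le ⟨_, rfl, hE.2⟩)

theorem indeg_top : indeg K (⊤ : Ideal (MvPolynomial σ K)) = 0 :=
  Nat.eq_zero_of_le_zero (Nat.sInf_le ⟨∅, rfl, Submodule.mem_top⟩)

-- `sSup` of an unbounded set of natural numbers is `0`.
theorem monGrade_top : monGrade K (⊤ : Ideal (MvPolynomial σ K)) = 0 := by
  have huniv : {k | sqfreePower K (⊤ : Ideal (MvPolynomial σ K)) k ≠ ⊥} = Set.univ :=
    Set.eq_univ_of_forall fun k => ne_of_eq_of_ne (sqfreePower_top k) top_ne_bot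
  rw [monGrade, huniv, Nat.sSup_of_not_bddAbove not_bddAbove_univ]

variable [Finite σ]

theorem bddAbove_sqfreePower_ne_bot (hI : I ≠ ⊤) : BddAbove {k | sqfreePower K I k ≠ ⊥} := by
  have hKrull (F : Finset σ) : ∃ l, sqMon K F ∉ I ^ l := by
    by_contra! h
    have hmem : sqMon K F ∈ ⨅ l, I ^ l := (Submodule.mem_iInf _).2 h
    rw [Ideal.iInf_pow_eq_bot_of_isDomain I hI, Ideal.mem_bot] at hmem
    exact sqMon_ne_zero F hmem
  choose l hl using hKrull
  obtain ⟨b, hb⟩ := (Set.finite_range l).bddAbove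
  refine ⟨b, fun k hk => ?_⟩
  obtain ⟨F, hF⟩ := sqfreePower_ne_bot_iff.1 hk
  by_contra! hbk
  exact hl F (Ideal.pow_le_pow_right ((hb ⟨F, rfl⟩).trans hbk.le) hF)

theorem le_monGrade_iff (hI : I ≠ ⊤) : k ≤ monGrade K I ↔ sqfreePower K I k ≠ ⊥ := by
  have hbdd := bddAbove_sqfreePower_ne_bot hI
  have hzero : sqfreePower K I 0 ≠ ⊥ :=
    sqfreePower_ne_bot_iff.2 ⟨∅, by rw [pow_zero, Ideal.one_eq_top]; exact Submodule.mem_top⟩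
  refine ⟨fun hk => ?_, fun hk => le_csSup hbdd hk⟩
  exact ne_bot_of_le_ne_bot (Nat.sSup_mem ⟨0, hzero⟩ hbdd) (sqfreePower_antitone I hk)

variable [Finite τ]

theorem nDepth_mul (hI : I ≠ ⊤) (hJ : J ≠ ⊤) (hk : 1 ≤ k)
    (hIk : sqfreePower K I k ≠ ⊥) (hJk : sqfreePower K J k ≠ ⊥) :
    nDepth K (extendLeft τ I * extendRight σ J) k = nDepth K I k + nDepth K J k := by
  rw [nDepth, sqfreePower_mul, indeg_mul (exists_sqMon_mem_sqfreePower hIk)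
      (exists_sqMon_mem_sqfreePower hJk),
    polyDepth_mul (sqfreePower_le_idealOfVars hI hk) hIk (sqfreePower_le_idealOfVars hJ hk) hJk,
    nDepth, nDepth]
  push_cast
  ring

theorem nDepth_top_mul (hJ : J ≠ ⊤) (hk : 1 ≤ k) (hJk : sqfreePower K J k ≠ ⊥) :
    nDepth K (extendLeft τ (⊤ : Ideal (MvPolynomial σ K)) * extendRight σ J) k =
      Nat.card σ + nDepth K J k := by
  rw [nDepth, sqfreePower_mul, sqfreePower_top, indeg_mul ⟨∅, Submodule.mem_top⟩
      (exists_sqMon_mem_sqfreePower hJk), indeg_top, extendLeft, Ideal.map_top, Ideal.top_mul,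
    polyDepth_extendRight (sqfreePower_le_idealOfVars hJ hk), nDepth]
  push_cast
  ring

theorem nDepth_mul_top (hI : I ≠ ⊤) (hk : 1 ≤ k) (hIk : sqfreePower K I k ≠ ⊥) :
    nDepth K (extendLeft τ I * extendRight σ (⊤ : Ideal (MvPolynomial τ K))) k =
      nDepth K I k + Nat.card τ := by
  rw [nDepth, sqfreePower_mul, sqfreePower_top, indeg_mul (exists_sqMon_mem_sqfreePower hIk)
      ⟨∅, Submodule.mem_top⟩, indeg_top, extendRight, Ideal.map_top, Ideal.mul_top,
    polyDepth_extendLeft (sqfreePower_le_idealOfVars hI hk), nDepth]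
  push_cast
  ring

theorem normalized_depth_of_product_nonincreasing_general (I : Ideal (MvPolynomial σ K))
    (J : Ideal (MvPolynomial τ K))
    (hgI : ∀ k, 1 ≤ k → k + 1 ≤ monGrade K I → nDepth K I (k + 1) ≤ nDepth K I k)
    (hgJ : ∀ k, 1 ≤ k → k + 1 ≤ monGrade K J → nDepth K J (k + 1) ≤ nDepth K J k) (k : ℕ)
    (hk : 1 ≤ k) (hkIJ : k + 1 ≤ monGrade K (extendLeft τ I * extendRight σ J)) :
    nDepth K (extendLeft τ I * extendRight σ J) (k + 1) ≤
      nDepth K (extendLeft τ I * extendRight σ J) k := by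
  have hIJ : extendLeft τ I * extendRight σ J ≠ ⊤ := by
    intro h
    rw [h, monGrade_top] at hkIJ
    omega
  obtain ⟨hI₁, hJ₁⟩ := sqfreePower_ne_bot_of_mul_ne_bot ((le_monGrade_iff hIJ).1 hkIJ)
  have hI₀ := ne_bot_of_le_ne_bot hI₁ (sqfreePower_antitone I k.le_succ)
  have hJ₀ := ne_bot_of_le_ne_bot hJ₁ (sqfreePower_antitone J k.le_succ)
  have hk₁ : 1 ≤ k + 1 := k.succ_pos
  obtain rfl | hI := eq_or_ne I ⊤ <;> obtain rfl | hJ := eq_or_ne J ⊤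
  · rw [extendLeft, extendRight, Ideal.map_top, Ideal.map_top, Ideal.top_mul] at hIJ
    exact absurd rfl hIJ
  · rw [nDepth_top_mul hJ hk₁ hJ₁, nDepth_top_mul hJ hk hJ₀]
    exact add_le_add_right (hgJ k hk ((le_monGrade_iff hJ).2 hJ₁)) _
  · rw [nDepth_mul_top hI hk₁ hI₁, nDepth_mul_top hI hk hI₀]
    exact add_le_add_left (hgI k hk ((le_monGrade_iff hI).2 hI₁)) _
  · rw [nDepth_mul hI hJ hk₁ hI₁ hJ₁, nDepth_mul hI hJ hk hI₀ hJ₀]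
    exact add_le_add (hgI k hk ((le_monGrade_iff hI).2 hI₁))
      (hgJ k hk ((le_monGrade_iff hJ).2 hJ₁))

end SquarefreePowers

/-- **Corollary 2.2.** If the normalized depth functions of squarefree monomial ideals
`I₁ ⊆ K[x₁,…,xₙ]` and `I₂ ⊆ K[y₁,…,y_m]` (disjoint variables) are both non-increasing,
then the normalized depth function of the product `I₁·I₂ ⊆ K[x₁,…,xₙ,y₁,…,y_m]`
is non-increasing on `{1,…,ν(I₁I₂)}`. -/
theorem normalized_depth_of_product_nonincreasing (K : Type) [Field K] (n m : ℕ)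
    (I₁ : Ideal (MvPolynomial (Fin n) K)) (I₂ : Ideal (MvPolynomial (Fin m) K))
    (h₁ : IsSqfreeMonomialIdeal K I₁) (h₂ : IsSqfreeMonomialIdeal K I₂)
    (hg₁ : ∀ k : ℕ, 1 ≤ k → k + 1 ≤ monGrade K I₁ → nDepth K I₁ (k + 1) ≤ nDepth K I₁ k)
    (hg₂ : ∀ k : ℕ, 1 ≤ k → k + 1 ≤ monGrade K I₂ → nDepth K I₂ (k + 1) ≤ nDepth K I₂ k)
    (P : Ideal (MvPolynomial (Fin n ⊕ Fin m) K))
    (hP : P = Ideal.map (MvPolynomial.rename (Sum.inl : Fin n → Fin n ⊕ Fin m)) I₁ *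
              Ideal.map (MvPolynomial.rename (Sum.inr : Fin m → Fin n ⊕ Fin m)) I₂) :
    ∀ k : ℕ, 1 ≤ k → k + 1 ≤ monGrade K P → nDepth K P (k + 1) ≤ nDepth K P k := by
  subst hP
  exact normalized_depth_of_product_nonincreasing_general I₁ I₂ hg₁ hg₂
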